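/- Suppose for each i = 1,…,m the functions f_{i,1},…,f_{i,n} : ℝ^d → ℝ are differentiable and L-average smooth, and set f_i = (1/n)Σ_{j=1}^n f_{i,j}. Let η > 0, p ∈ (0,1], b ≥ 1, and let x, x⁺, g, s ∈ ℝ^{m×d}. Define V = (1/m)‖g − ∇𝐟(x)‖² and C = ‖x − 𝟙x̄ᵀ‖² + η²‖s − 𝟙s̄ᵀ‖², and assume the consensus bound ‖x⁺ − 𝟙(x̄⁺)ᵀ‖² ≤ 2C. Then (1−p)·(1/m) Σ_{i=1}^m n^{−b} Σ_{ξ : {1,…,b}→{1,…,n}} ‖g(i) + (1/b)Σ_{k=1}^b (∇f_{i,ξ(k)}(x⁺(i)) − ∇f_{i,ξ(k)}(x(i))) − ∇f_i(x⁺(i))‖² ≤ (1−p)[V + (9L²/(mb)) C + (3L²/b)‖x̄⁺ − x̄‖²]. -/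

import Mathlib

open scoped BigOperators

noncomputable section

/-- Frobenius norm of a matrix represented by its rows (Euclidean norm for vectors). -/
def fnorm {m : ℕ} {E : Type} [NormedAddCommGroup E] (u : Fin m → E) : ℝ :=
  Real.sqrt (∑ i, ‖u i‖ ^ 2)

/-- Average of the rows of a matrix: `ū = (1/m) 𝟙ᵀ u`. -/
def rowAvg {m : ℕ} {E : Type} [AddCommGroup E] [Module ℝ E] (u : Fin m → E) : E :=
  (m : ℝ)⁻¹ • ∑ i, u i

/-- Action of the gossip matrix `W` on the rows of `u`. -/
def gossipMul {m : ℕ} (W : Fin m → Fin m → ℝ) {E : Type} [AddCommGroup E] [Module ℝ E]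
    (u : Fin m → E) : Fin m → E :=
  fun i => ∑ j, W i j • u j

/-- The pair `(u^(k), u^(k-1))` of the Chebyshev-accelerated gossip recursion
`u^(k+1) = (1+η_u) W u^(k) - η_u u^(k-1)` with
`η_u = (1 - √(1-λ₂²))/(1 + √(1-λ₂²))`. -/
def fastMixPair {m : ℕ} (W : Fin m → Fin m → ℝ) (lam : ℝ) {E : Type} [AddCommGroup E]
    [Module ℝ E] (u0 : Fin m → E) : ℕ → (Fin m → E) × (Fin m → E)
  | 0 => (u0, u0)
  | K + 1 =>
      let p := fastMixPair W lam u0 K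
      let etau := (1 - Real.sqrt (1 - lam ^ 2)) / (1 + Real.sqrt (1 - lam ^ 2))
      ((1 + etau) • gossipMul W p.1 - etau • p.2, p.1)

/-- `FastMix(u⁰, K) = u^(K)`. -/
def fastMix {m : ℕ} (W : Fin m → Fin m → ℝ) (lam : ℝ) {E : Type} [AddCommGroup E]
    [Module ℝ E] (u0 : Fin m → E) (K : ℕ) : Fin m → E :=
  (fastMixPair W lam u0 K).1

theorem aux_avg {n : ℕ} (hn : 1 ≤ n) {E : Type} [NormedAddCommGroup E] [InnerProductSpace ℝ E]
    (Y : Fin n → E) (hY : ∑ j, Y j = 0) (c : ℝ) (b : ℕ) : ∀ a : E,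
    ((n : ℝ) ^ b)⁻¹ * ∑ ξ : Fin b → Fin n, ‖a + c • ∑ k, Y (ξ k)‖ ^ 2
      = ‖a‖ ^ 2 + c ^ 2 * b * ((n : ℝ)⁻¹ * ∑ j, ‖Y j‖ ^ 2) := by
  have hn0 : (n : ℝ) ≠ 0 := by positivity
  induction b with
  | zero => intro a; simp
  | succ b ih =>
    intro a
    rw [← (Fin.consEquiv (fun _ : Fin (b + 1) => Fin n)).sum_comp, Fintype.sum_prod_type]
    have h1 : ∀ j : Fin n, ∑ ξ : Fin b → Fin n,
        ‖a + c • ∑ k, Y ((Fin.consEquiv (fun _ : Fin (b + 1) => Fin n)) (j, ξ) k)‖ ^ 2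
        = (n : ℝ) ^ b * (‖a + c • Y j‖ ^ 2 + c ^ 2 * b * ((n : ℝ)⁻¹ * ∑ j, ‖Y j‖ ^ 2)) := by
      intro j
      rw [← ih (a + c • Y j), ← mul_assoc, mul_inv_cancel₀ (pow_ne_zero _ hn0), one_mul]
      refine Finset.sum_congr rfl fun ξ _ => ?_
      simp [Fin.sum_univ_succ, Fin.consEquiv, smul_add, add_assoc]
    have h2 : ∑ j, ‖a + c • Y j‖ ^ 2 = n * ‖a‖ ^ 2 + c ^ 2 * ∑ j, ‖Y j‖ ^ 2 := by
      have h3 : ∀ j, ‖a + c • Y j‖ ^ 2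
          = ‖a‖ ^ 2 + 2 * (c * inner ℝ a (Y j)) + c ^ 2 * ‖Y j‖ ^ 2 := by
        intro j
        rw [norm_add_sq_real, inner_smul_right, norm_smul, mul_pow]
        simp
      simp only [h3, Finset.sum_add_distrib, ← Finset.mul_sum, ← inner_sum, hY]
      simp
    rw [Finset.sum_congr rfl fun j _ => h1 j, ← Finset.mul_sum, Finset.sum_add_distrib, h2]
    simp only [Finset.sum_const, Finset.card_univ, Fintype.card_fin, nsmul_eq_mul]
    push_cast
    field_simp
    ring

theorem aux_var {n b : ℕ} (hn : 1 ≤ n) (hb : 1 ≤ b) {E : Type} [NormedAddCommGroup E]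
    [InnerProductSpace ℝ E] (D : Fin n → E) (M a : E) (hM : M = (n : ℝ)⁻¹ • ∑ j, D j) :
    ((n : ℝ) ^ b)⁻¹ * ∑ ξ : Fin b → Fin n, ‖a + (b : ℝ)⁻¹ • (∑ k, D (ξ k)) - M‖ ^ 2
      ≤ ‖a‖ ^ 2 + (b : ℝ)⁻¹ * ((n : ℝ)⁻¹ * ∑ j, ‖D j‖ ^ 2) := by
  have hn0 : (n : ℝ) ≠ 0 := by positivity
  have hb0 : (b : ℝ) ≠ 0 := by positivity
  have hS : ∑ j, D j = (n : ℝ) • M := by rw [hM, smul_inv_smul₀ hn0]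
  have hY : ∑ j, (D j - M) = 0 := by
    rw [Finset.sum_sub_distrib, hS]; simp [Nat.cast_smul_eq_nsmul]
  have key := aux_avg hn (fun j => D j - M) hY (b : ℝ)⁻¹ b a
  have e : ∀ ξ : Fin b → Fin n, a + (b : ℝ)⁻¹ • (∑ k, D (ξ k)) - M
      = a + (b : ℝ)⁻¹ • ∑ k, (D (ξ k) - M) := by
    intro ξ
    rw [Finset.sum_sub_distrib, smul_sub, Finset.sum_const, Finset.card_univ, Fintype.card_fin,
      ← Nat.cast_smul_eq_nsmul ℝ, inv_smul_smul₀ hb0, add_sub_assoc]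
  simp only [e]
  rw [key]
  have h4 : ∑ j, ‖D j - M‖ ^ 2 ≤ ∑ j, ‖D j‖ ^ 2 := by
    have : ∀ j, ‖D j - M‖ ^ 2 = ‖D j‖ ^ 2 - 2 * inner ℝ (D j) M + ‖M‖ ^ 2 := fun j =>
      norm_sub_sq_real _ _
    simp only [this, Finset.sum_add_distrib, Finset.sum_sub_distrib, ← Finset.mul_sum,
      ← sum_inner, hS, inner_smul_left, real_inner_self_eq_norm_sq]
    simp
    nlinarith [mul_nonneg (Nat.cast_nonneg (α := ℝ) n) (sq_nonneg ‖M‖)]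
  have h5 : ((b : ℝ)⁻¹) ^ 2 * b = (b : ℝ)⁻¹ := by field_simp
  rw [h5]
  gcongr

theorem aux_three {E : Type} [NormedAddCommGroup E] (u v w : E) :
    ‖u + v + w‖ ^ 2 ≤ 3 * (‖u‖ ^ 2 + ‖v‖ ^ 2 + ‖w‖ ^ 2) := by
  have h := norm_add₃_le (a := u) (b := v) (c := w)
  have h' : ‖u + v + w‖ ^ 2 ≤ (‖u‖ + ‖v‖ + ‖w‖) ^ 2 := by gcongr
  nlinarith [sq_nonneg (‖u‖ - ‖v‖), sq_nonneg (‖u‖ - ‖w‖), sq_nonneg (‖v‖ - ‖w‖)]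

theorem aux_fnorm {m : ℕ} {E : Type} [NormedAddCommGroup E] (u : Fin m → E) :
    fnorm u ^ 2 = ∑ i, ‖u i‖ ^ 2 := Real.sq_sqrt (by positivity)

theorem aux_grad {n : ℕ} {E : Type} [NormedAddCommGroup E] [InnerProductSpace ℝ E]
    [CompleteSpace E] (f : Fin n → E → ℝ) (hf : ∀ j, Differentiable ℝ (f j)) (F : E → ℝ)
    (hF : ∀ x, F x = (n : ℝ)⁻¹ * ∑ j, f j x) (x : E) :
    gradient F x = (n : ℝ)⁻¹ • ∑ j, gradient (f j) x := by
  have h : HasFDerivAt F ((n : ℝ)⁻¹ • ∑ j, fderiv ℝ (f j) x) x := by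
    have h1 : HasFDerivAt (fun y => ∑ j, f j y) (∑ j, fderiv ℝ (f j) x) x :=
      HasFDerivAt.fun_sum fun j _ => (hf j x).hasFDerivAt
    have := h1.const_mul (n : ℝ)⁻¹
    rwa [← funext hF] at this
  simp [gradient, h.fderiv, map_sum]

theorem statement11 (m n d b : ℕ) (hm : 1 ≤ m) (hn : 1 ≤ n) (hb : 1 ≤ b)
    (L η p : ℝ) (hη : 0 < η) (hp0 : 0 < p) (hp1 : p ≤ 1)
    (f : Fin m → Fin n → EuclideanSpace ℝ (Fin d) → ℝ)
    (hdiff : ∀ i j, Differentiable ℝ (f i j))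
    (havg : ∀ i, ∀ x x' : EuclideanSpace ℝ (Fin d),
      (n : ℝ)⁻¹ * ∑ j, ‖gradient (f i j) x - gradient (f i j) x'‖ ^ 2 ≤ L ^ 2 * ‖x - x'‖ ^ 2)
    (fi : Fin m → EuclideanSpace ℝ (Fin d) → ℝ)
    (hfi : ∀ i x, fi i x = (n : ℝ)⁻¹ * ∑ j, f i j x)
    (x xp g s : Fin m → EuclideanSpace ℝ (Fin d))
    (hcons : fnorm (xp - fun _ => rowAvg xp) ^ 2 ≤
      2 * (fnorm (x - fun _ => rowAvg x) ^ 2 + η ^ 2 * fnorm (s - fun _ => rowAvg s) ^ 2)) :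
    (1 - p) * ((m : ℝ)⁻¹ * ∑ i, ((n : ℝ) ^ b)⁻¹ * ∑ ξ : Fin b → Fin n,
        ‖g i + (b : ℝ)⁻¹ • (∑ k, (gradient (f i (ξ k)) (xp i) - gradient (f i (ξ k)) (x i)))
          - gradient (fi i) (xp i)‖ ^ 2)
      ≤ (1 - p) * ((m : ℝ)⁻¹ * fnorm (g - fun i => gradient (fi i) (x i)) ^ 2
          + (9 * L ^ 2 / ((m : ℝ) * (b : ℝ))) *
              (fnorm (x - fun _ => rowAvg x) ^ 2 + η ^ 2 * fnorm (s - fun _ => rowAvg s) ^ 2)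
          + (3 * L ^ 2 / (b : ℝ)) * ‖rowAvg xp - rowAvg x‖ ^ 2) := by
  have hm0 : (0 : ℝ) < m := by positivity
  have hb0 : (0 : ℝ) < b := by positivity
  refine mul_le_mul_of_nonneg_left ?_ (by linarith)
  set C := fnorm (x - fun _ => rowAvg x) ^ 2 + η ^ 2 * fnorm (s - fun _ => rowAvg s) ^ 2 with hC
  have hx : fnorm (x - fun _ => rowAvg x) ^ 2 ≤ C := by
    rw [hC]; nlinarith [mul_nonneg (sq_nonneg η) (sq_nonneg (fnorm (s - fun _ => rowAvg s)))]
  rw [aux_fnorm] at hx hcons ⊢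
  simp only [Pi.sub_apply] at hx hcons ⊢
  have hi : ∀ i, ((n : ℝ) ^ b)⁻¹ * ∑ ξ : Fin b → Fin n,
        ‖g i + (b : ℝ)⁻¹ • (∑ k, (gradient (f i (ξ k)) (xp i) - gradient (f i (ξ k)) (x i)))
          - gradient (fi i) (xp i)‖ ^ 2
      ≤ ‖g i - gradient (fi i) (x i)‖ ^ 2 + (b : ℝ)⁻¹ * (L ^ 2 * ‖xp i - x i‖ ^ 2) := by
    intro i
    have h := aux_var hn hb (fun j => gradient (f i j) (xp i) - gradient (f i j) (x i))
      (gradient (fi i) (xp i) - gradient (fi i) (x i)) (g i - gradient (fi i) (x i)) (by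
        rw [aux_grad (f i) (hdiff i) (fi i) (hfi i), aux_grad (f i) (hdiff i) (fi i) (hfi i),
          Finset.sum_sub_distrib, smul_sub])
    have e : ∀ z : EuclideanSpace ℝ (Fin d), g i - gradient (fi i) (x i) + z
        - (gradient (fi i) (xp i) - gradient (fi i) (x i)) = g i + z - gradient (fi i) (xp i) := by
      intro z; abel
    simp only [e] at h
    refine h.trans ?_
    have := havg i (xp i) (x i)
    gcongr
  have hd : ∑ i, ‖xp i - x i‖ ^ 2 ≤ 9 * C + 3 * m * ‖rowAvg xp - rowAvg x‖ ^ 2 := by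
    have h3 : ∀ i, ‖xp i - x i‖ ^ 2 ≤ 3 * (‖xp i - rowAvg xp‖ ^ 2
        + ‖rowAvg xp - rowAvg x‖ ^ 2 + ‖x i - rowAvg x‖ ^ 2) := by
      intro i
      have := aux_three (xp i - rowAvg xp) (rowAvg xp - rowAvg x) (rowAvg x - x i)
      rw [norm_sub_rev (rowAvg x) (x i)] at this
      simpa using this
    have := Finset.sum_le_sum fun i (_ : i ∈ Finset.univ) => h3 i
    rw [← Finset.mul_sum, Finset.sum_add_distrib, Finset.sum_add_distrib] at this
    simp only [Finset.sum_const, Finset.card_univ, Fintype.card_fin, nsmul_eq_mul] at this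
    linarith
  have hs := Finset.sum_le_sum fun i (_ : i ∈ Finset.univ) => hi i
  rw [Finset.sum_add_distrib] at hs
  calc _ ≤ (m : ℝ)⁻¹ * (∑ i, ‖g i - gradient (fi i) (x i)‖ ^ 2
        + (b : ℝ)⁻¹ * (L ^ 2 * (9 * C + 3 * m * ‖rowAvg xp - rowAvg x‖ ^ 2))) := by
        refine mul_le_mul_of_nonneg_left (hs.trans ?_) (by positivity)
        rw [← Finset.mul_sum, ← Finset.mul_sum]
        gcongr
    _ = _ := by
        field_simp
        ring
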